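/- arXiv:2012.02271 — 2 statements merged into one kernel-verified Lean document; each statement's English description precedes it below -/
import Mathlib

section
/- Let V be a finite vertex set equipped with a linear order and let G be a simple graph on V. For each vertex u ∈ V define the map M_u = (B_u, U_u) over unordered pairs of distinct vertices by: B_u = { {u,w} : G.Adj u w and u < w } (blocked edges) and U_u = { {u,w} : w ≠ u and (¬G.Adj u w or w < u) } (unblocked edges). Then for all distinct u, v ∈ V, the map M_u agrees with the map M_v if and only if u and v are not adjacent in G. (Key property of the map family constructed in the NP-hardness reduction of the Map Merging Problem from Minimum Graph Coloring, Lemma 1.) -/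
/-- A map is a pair `(B, U)` of sets of edges (blocked, unblocked);
`(B₂, U₂)` agrees with `(B₁, U₁)` if `B₂ ∩ U₁ = ∅` and `U₂ ∩ B₁ = ∅`. -/
def MapAgrees {ε : Type*} (M₂ M₁ : Set ε × Set ε) : Prop :=
  M₂.1 ∩ M₁.2 = ∅ ∧ M₂.2 ∩ M₁.1 = ∅

/-- Blocked edges of the map `M_u` in the reduction from Minimum Graph
Coloring: edges `{u,w}` with `G.Adj u w` and `u < w`. -/
def reductionBlocked {V : Type*} [LinearOrder V] (G : SimpleGraph V) (u : V) :
    Set (Sym2 V) :=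
  {e | ∃ w, e = s(u, w) ∧ G.Adj u w ∧ u < w}

/-- Unblocked edges of the map `M_u` in the reduction from Minimum Graph
Coloring: edges `{u,w}` with `w ≠ u` and (`¬G.Adj u w` or `w < u`). -/
def reductionUnblocked {V : Type*} [LinearOrder V] (G : SimpleGraph V) (u : V) :
    Set (Sym2 V) :=
  {e | ∃ w, e = s(u, w) ∧ w ≠ u ∧ (¬ G.Adj u w ∨ w < u)}

theorem mapAgrees_iff_disjoint {ε : Type*} {M₂ M₁ : Set ε × Set ε} :
    MapAgrees M₂ M₁ ↔ Disjoint M₂.1 M₁.2 ∧ Disjoint M₂.2 M₁.1 := by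
  simp only [MapAgrees, Set.disjoint_iff_inter_eq_empty]

section

variable {V : Type*} [LinearOrder V] {G : SimpleGraph V} {u v w : V} {e : Sym2 V}

theorem mem_of_mem_reductionBlocked (he : e ∈ reductionBlocked G u) : u ∈ e := by
  obtain ⟨w, rfl, -⟩ := he
  exact Sym2.mem_mk_left u w

theorem mem_of_mem_reductionUnblocked (he : e ∈ reductionUnblocked G u) : u ∈ e := by
  obtain ⟨w, rfl, -⟩ := he
  exact Sym2.mem_mk_left u w

theorem mk_mem_reductionBlocked_iff : s(u, w) ∈ reductionBlocked G u ↔ G.Adj u w ∧ u < w := by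
  simp only [reductionBlocked, Set.mem_ofPred_eq, Sym2.congr_right, exists_eq_left']

theorem mk_mem_reductionUnblocked_iff :
    s(u, w) ∈ reductionUnblocked G u ↔ w ≠ u ∧ (¬ G.Adj u w ∨ w < u) := by
  simp only [reductionUnblocked, Set.mem_ofPred_eq, Sym2.congr_right, exists_eq_left']

theorem disjoint_reductionBlocked_reductionUnblocked_self (G : SimpleGraph V) (u : V) :
    Disjoint (reductionBlocked G u) (reductionUnblocked G u) := by
  refine Set.disjoint_left.mpr ?_
  rintro _ ⟨w, rfl, hadj, hlt⟩ hunblocked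
  obtain ⟨-, hnadj | hgt⟩ := mk_mem_reductionUnblocked_iff.mp hunblocked
  · exact hnadj hadj
  · exact hlt.not_gt hgt

-- Key point: `M_u` only knows edges at `u`, so for `u ≠ v` the sets can only meet in `s(u, v)`.
theorem disjoint_reductionBlocked_reductionUnblocked_iff :
    Disjoint (reductionBlocked G u) (reductionUnblocked G v) ↔ ¬ (G.Adj u v ∧ u < v) := by
  constructor
  · rintro hdisj ⟨hadj, hlt⟩
    have hblocked : s(u, v) ∈ reductionBlocked G u :=
      mk_mem_reductionBlocked_iff.mpr ⟨hadj, hlt⟩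
    have hunblocked : s(v, u) ∈ reductionUnblocked G v :=
      mk_mem_reductionUnblocked_iff.mpr ⟨hlt.ne, Or.inr hlt⟩
    exact Set.disjoint_left.mp hdisj hblocked (Sym2.eq_swap ▸ hunblocked)
  · intro hnot
    obtain rfl | hne := eq_or_ne u v
    · exact disjoint_reductionBlocked_reductionUnblocked_self G u
    · refine Set.disjoint_left.mpr fun e hblocked hunblocked => hnot ?_
      have he : e = s(u, v) := (Sym2.mem_and_mem_iff hne).mp
        ⟨mem_of_mem_reductionBlocked hblocked, mem_of_mem_reductionUnblocked hunblocked⟩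
      exact mk_mem_reductionBlocked_iff.mp (he ▸ hblocked)

theorem reduction_maps_agree_iff_not_adj_general (G : SimpleGraph V) (u v : V) :
    MapAgrees (reductionBlocked G u, reductionUnblocked G u)
        (reductionBlocked G v, reductionUnblocked G v) ↔ ¬ G.Adj u v := by
  rw [mapAgrees_iff_disjoint, disjoint_comm (a := reductionUnblocked G u),
    disjoint_reductionBlocked_reductionUnblocked_iff,
    disjoint_reductionBlocked_reductionUnblocked_iff]
  constructor
  · rintro ⟨hnot_lt, hnot_gt⟩ hadj
    obtain hlt | hgt := hadj.ne.lt_or_gt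
    · exact hnot_lt ⟨hadj, hlt⟩
    · exact hnot_gt ⟨hadj.symm, hgt⟩
  · exact fun hnadj => ⟨fun h => hnadj h.1, fun h => hnadj h.1.symm⟩

end

/-- Key property of the map family in the NP-hardness reduction of the Map
Merging Problem (Lemma 1): for distinct vertices `u, v`, the constructed maps
`M_u` and `M_v` agree if and only if `u` and `v` are not adjacent in `G`. -/
theorem reduction_maps_agree_iff_not_adj
    {V : Type*} [Fintype V] [LinearOrder V] (G : SimpleGraph V)
    (u v : V) (huv : u ≠ v) :
    MapAgrees (reductionBlocked G u, reductionUnblocked G u)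
        (reductionBlocked G v, reductionUnblocked G v) ↔ ¬ G.Adj u v :=
  reduction_maps_agree_iff_not_adj_general G u v
end

section
/- Let V be a finite vertex set equipped with a linear order, let G be a simple graph on V, and let {M_u}_{u ∈ V} be the family of maps constructed from G as in the NP-hardness reduction (edges not incident to u unknown in M_u; edges {u,w} with u,w non-adjacent unblocked in both M_u and M_w; each G-edge {u,w} blocked in the map of the smaller endpoint and unblocked in the map of the larger endpoint). Then for every natural number k, there exists a partition of V into at most k classes such that within each class the maps M_u pairwise agree if and only if G is k-colorable. (Core equivalence establishing the reduction from Minimum Graph Coloring to the Map Merging Problem in Lemma 1.) -/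
/-!
The maps of `u ≠ v` can only conflict on the edge `{u, v}` itself, since a common edge of the two maps
is incident to both vertices. If `u` and `v` are adjacent, then this edge is blocked in the map of
the smaller endpoint and unblocked in the other, so there is a conflict; if they are not adjacent,
neither map blocks it. Hence two maps agree exactly when their vertices are not adjacent, and
merging classes are colour classes.
-/

section Reduction

variable {V : Type*} [LinearOrder V] (G : SimpleGraph V)

theorem mem_reductionBlocked_inter_reductionUnblocked_iff (u v : V) (e : Sym2 V) :
    e ∈ reductionBlocked G u ∩ reductionUnblocked G v ↔ e = s(u, v) ∧ G.Adj u v ∧ u < v := by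
  constructor
  · rintro ⟨⟨w, rfl, hadj, huw⟩, x, hedge, -, hunblocked⟩
    rcases Sym2.eq_iff.mp hedge with ⟨rfl, rfl⟩ | ⟨rfl, rfl⟩
    · exact (hunblocked.elim (· hadj) huw.asymm).elim
    · exact ⟨rfl, hadj, huw⟩
  · rintro ⟨rfl, hadj, huv⟩
    exact ⟨⟨v, rfl, hadj, huv⟩, u, Sym2.eq_swap, hadj.ne, Or.inr huv⟩

theorem reductionBlocked_inter_reductionUnblocked_eq_empty_iff (u v : V) :
    reductionBlocked G u ∩ reductionUnblocked G v = ∅ ↔ ¬ (G.Adj u v ∧ u < v) := by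
  simp only [Set.eq_empty_iff_forall_notMem, mem_reductionBlocked_inter_reductionUnblocked_iff,
    not_and, forall_eq]

theorem mapAgrees_reduction_iff_not_adj (u v : V) :
    MapAgrees (reductionBlocked G u, reductionUnblocked G u)
      (reductionBlocked G v, reductionUnblocked G v) ↔ ¬ G.Adj u v := by
  simp only [MapAgrees, Set.inter_comm (reductionUnblocked G u),
    reductionBlocked_inter_reductionUnblocked_eq_empty_iff, G.adj_comm v u]
  constructor
  · rintro ⟨hlt, hgt⟩ hadj
    exact hadj.ne.lt_or_gt.elim (fun h => hlt ⟨hadj, h⟩) (fun h => hgt ⟨hadj, h⟩)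
  · exact fun hadj => ⟨fun h => hadj h.1, fun h => hadj h.1⟩

theorem map_merging_partition_iff_colorable_general (α : Type*) :
    (∃ f : V → α, ∀ u v : V, f u = f v → u ≠ v →
        MapAgrees (reductionBlocked G u, reductionUnblocked G u)
          (reductionBlocked G v, reductionUnblocked G v)) ↔
      Nonempty (G.Coloring α) := by
  simp only [mapAgrees_reduction_iff_not_adj]
  constructor
  · rintro ⟨f, hf⟩
    exact ⟨SimpleGraph.Coloring.mk f fun {u v} hadj heq => hf u v heq hadj.ne hadj⟩
  · rintro ⟨c⟩
    exact ⟨c, fun u v heq _ hadj => c.valid hadj heq⟩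

end Reduction

/-- Core equivalence of the reduction from Minimum Graph Coloring to the Map
Merging Problem (Lemma 1): the vertex set can be partitioned into at most `k`
classes within which the constructed maps pairwise agree if and only if `G`
is `k`-colorable. -/
theorem map_merging_partition_iff_colorable
    {V : Type*} [Fintype V] [LinearOrder V] (G : SimpleGraph V) (k : ℕ) :
    (∃ f : V → Fin k, ∀ u v : V, f u = f v → u ≠ v →
        MapAgrees (reductionBlocked G u, reductionUnblocked G u)
          (reductionBlocked G v, reductionUnblocked G v)) ↔
      G.Colorable k :=
  map_merging_partition_iff_colorable_general G (Fin k)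
end
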